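/- Let u ∈ C³(ℝ) satisfy 1/𝔘 ≤ u', |u''|/u' ≤ 𝔘, |u'''|/u' ≤ 𝔘 for some 𝔘 ≥ 1, and suppose f solves ∂_t f + u∂_x f = ν∂_{yy} f with ν = 0 (free transport). Let J = ∂_y + t u'∂_x and let f_k be the projection onto x-frequency band ±k, k ≥ 1. Then ‖f_k(t)‖² + ‖Jf_k(t)‖² = ‖f_k(0)‖² + ‖∂_y f_k(0)‖² for all t ≥ 0, and consequently (kt)²‖f_k(t)‖²_{Ḣ⁻¹} ≤ 4𝔘⁴(‖f_k(0)‖² + ‖∂_y f_k(0)‖²). -/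

import Mathlib

open MeasureTheory

/-!
Write `f_k` through its Fourier coefficient `g`. Along free transport
`g t = exp (-i k t u) g 0`, and the vector field is a conjugated derivative,
`J = exp (-i k t u) ∘ ∂_y ∘ exp (i k t u)`; so `|g|` and `|J g|` are conserved pointwise.

For the decay, `Δψ = g` gives `‖g‖²_{Ḣ⁻¹} = -Re ∫ g ψ̄`, where `i k t u' g = J g - ∂_y g` trades a
factor `k t` for `J g`. Testing against `ψ̄ / u'` and integrating `∂_y` by parts yields
`k t |∫ g ψ̄| ≤ 𝔘² ∫ (|J g| |ψ| + |g| (|ψ| + |ψ'|))`, and Young's inequality absorbs `ψ`.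
-/

/-- A strictly monotone shear profile `u` whose curvature is controlled by its slope, with the
constant `U ≥ 1` of the paper bounding both. -/
structure IsMonotoneShear (U : ℝ) (u : ℝ → ℝ) : Prop where
  one_le : 1 ≤ U
  differentiable : Differentiable ℝ u
  differentiable_deriv : Differentiable ℝ (deriv u)
  inv_le_deriv : ∀ y, 1 / U ≤ deriv u y
  abs_deriv_deriv_le : ∀ y, |deriv (deriv u) y| ≤ U * deriv u y

/-- The transport equation `∂_t f + u ∂_x f = 0` for the Fourier coefficient `g t y` of `f` at
`x`-frequency `k`. -/
def IsFreeTransport (u : ℝ → ℝ) (k : ℝ) (g : ℝ → ℝ → ℂ) : Prop :=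
  ∀ t y, HasDerivAt (fun s => g s y) (-(Complex.I * k * u y * g t y)) t

/-- The vector field `J = ∂_y + t u' ∂_x` acting on the Fourier coefficient `g` at
`x`-frequency `k`. -/
noncomputable def vectorFieldJ (u : ℝ → ℝ) (k t : ℝ) (g : ℝ → ℂ) (y : ℝ) : ℂ :=
  deriv g y + Complex.I * k * t * deriv u y * g y

/-- `ψ` is the Fourier coefficient at `x`-frequency `k` of a stream function of `g`: `Δψ = g`.
Decay at infinity, which would make `ψ` unique, is not part of the notion. -/
structure IsStreamFunction (k : ℝ) (g ψ : ℝ → ℂ) : Prop where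
  differentiable : Differentiable ℝ ψ
  differentiable_deriv : Differentiable ℝ (deriv ψ)
  deriv_deriv_sub : ∀ y, deriv (deriv ψ) y - k ^ 2 * ψ y = g y

/-- The squared `Ḣ⁻¹` norm at `x`-frequency `k` of the function with stream function `ψ`. It is
the junk value `0` when `ψ` has infinite energy. -/
noncomputable def streamEnergy (k : ℝ) (ψ : ℝ → ℂ) : ℝ :=
  ∫ y, (‖deriv ψ y‖ ^ 2 + k ^ 2 * ‖ψ y‖ ^ 2)

section Conservation

variable {u : ℝ → ℝ} {k t : ℝ} {g : ℝ → ℝ → ℂ}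

lemma vectorFieldJ_exp_mul {f : ℝ → ℂ} {y : ℝ} (hu : DifferentiableAt ℝ u y)
    (hf : DifferentiableAt ℝ f y) :
    vectorFieldJ u k t (fun z => Circle.exp (-(k * t * u z)) * f z) y =
      Circle.exp (-(k * t * u y)) * deriv f y := by
  have h_exp := (((hu.hasDerivAt.const_mul (k * t)).fun_neg.ofReal_comp).mul_const Complex.I).cexp
  simp only [vectorFieldJ, Circle.coe_exp, (h_exp.fun_mul hf.hasDerivAt).deriv]
  push_cast
  ring

namespace IsFreeTransport

lemma eq_exp_mul (hg : IsFreeTransport u k g) (t y : ℝ) :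
    g t y = Circle.exp (-(k * t * u y)) * g 0 y := by
  have h_const (s : ℝ) :
      HasDerivAt (fun s : ℝ => Complex.exp (Complex.I * k * u y * s) * g s y) 0 s := by
    have h_exp := (((hasDerivAt_id s).ofReal_comp).const_mul (Complex.I * k * u y)).cexp
    refine (h_exp.mul (hg s y)).congr_deriv ?_
    simp only [id_eq]
    push_cast
    ring
  have h_eq := is_const_of_deriv_eq_zero (fun s => (h_const s).differentiableAt)
    (fun s => (h_const s).deriv) t 0
  simp only [Complex.ofReal_zero, mul_zero, Complex.exp_zero, one_mul] at h_eq
  rw [← h_eq, Circle.coe_exp, ← mul_assoc, ← Complex.exp_add]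
  push_cast
  ring_nf
  simp

lemma differentiable (hg : IsFreeTransport u k g) (hu : Differentiable ℝ u)
    (hg₀ : Differentiable ℝ (g 0)) (t : ℝ) : Differentiable ℝ (g t) := by
  rw [funext (hg.eq_exp_mul t)]
  simp only [Circle.coe_exp]
  fun_prop

lemma norm_eq (hg : IsFreeTransport u k g) (t y : ℝ) : ‖g t y‖ = ‖g 0 y‖ := by
  rw [hg.eq_exp_mul t y, norm_mul, Circle.norm_coe, one_mul]

lemma norm_vectorFieldJ_eq (hg : IsFreeTransport u k g) (hu : Differentiable ℝ u)
    (hg₀ : Differentiable ℝ (g 0)) (t y : ℝ) :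
    ‖vectorFieldJ u k t (g t) y‖ = ‖deriv (g 0) y‖ := by
  rw [funext (hg.eq_exp_mul t), vectorFieldJ_exp_mul (hu y) (hg₀ y), norm_mul, Circle.norm_coe,
    one_mul]

lemma memLp {p : ENNReal} (hg : IsFreeTransport u k g) (hu : Differentiable ℝ u)
    (hg₀ : Differentiable ℝ (g 0)) (hg₀_memLp : MemLp (g 0) p) (t : ℝ) : MemLp (g t) p :=
  hg₀_memLp.congr_norm (hg.differentiable hu hg₀ t).continuous.aestronglyMeasurable
    (.of_forall fun y => (hg.norm_eq t y).symm)

lemma memLp_vectorFieldJ {p : ENNReal} (hg : IsFreeTransport u k g) (hu : Differentiable ℝ u)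
    (hg₀ : Differentiable ℝ (g 0)) (hg₀'_memLp : MemLp (deriv (g 0)) p) (t : ℝ) :
    MemLp (vectorFieldJ u k t (g t)) p := by
  refine hg₀'_memLp.congr_norm (Measurable.aestronglyMeasurable ?_)
    (.of_forall fun y => (hg.norm_vectorFieldJ_eq hu hg₀ t y).symm)
  have := measurable_deriv u
  have := measurable_deriv (g t)
  have := (hg.differentiable hu hg₀ t).continuous.measurable
  unfold vectorFieldJ
  fun_prop

end IsFreeTransport

end Conservation

section Duality

variable {U k t : ℝ} {u : ℝ → ℝ} {g φ : ℝ → ℂ}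

lemma integral_vectorFieldJ_mul (hg : Differentiable ℝ g) (hφ : Differentiable ℝ φ)
    (h_field : Integrable fun y => vectorFieldJ u k t g y * φ y)
    (h_weight : Integrable fun y => g y * (deriv u y * φ y))
    (h_deriv : Integrable fun y => g y * deriv φ y) (h_mul : Integrable fun y => g y * φ y) :
    ∫ y, vectorFieldJ u k t g y * φ y =
      Complex.I * k * t * (∫ y, g y * (deriv u y * φ y)) - ∫ y, g y * deriv φ y := by
  have h_split (y : ℝ) : deriv g y * φ y =
      vectorFieldJ u k t g y * φ y - Complex.I * k * t * (g y * (deriv u y * φ y)) := by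
    rw [vectorFieldJ]
    ring
  have h_weight' := h_weight.const_mul (Complex.I * k * t)
  have h_parts := integral_mul_deriv_eq_deriv_mul_of_integrable (fun y _ => (hg y).hasDerivAt)
    (fun y _ => (hφ y).hasDerivAt) h_deriv
    ((h_field.sub h_weight').congr (.of_forall fun y => (h_split y).symm)) h_mul
  simp only [h_split] at h_parts
  rw [integral_sub h_field h_weight', integral_const_mul] at h_parts
  linear_combination h_parts

namespace IsMonotoneShear

lemma deriv_pos (hu : IsMonotoneShear U u) (y : ℝ) : 0 < deriv u y :=
  (one_div_pos.2 (zero_lt_one.trans_le hu.one_le)).trans_le (hu.inv_le_deriv y)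

lemma ofReal_deriv_ne_zero (hu : IsMonotoneShear U u) (y : ℝ) :
    ((deriv u y : ℝ) : ℂ) ≠ 0 :=
  Complex.ofReal_ne_zero.2 (hu.deriv_pos y).ne'

lemma norm_div_deriv_le (hu : IsMonotoneShear U u) (z : ℂ) (y : ℝ) :
    ‖z / deriv u y‖ ≤ U * ‖z‖ := by
  have h_one : 1 ≤ deriv u y * U :=
    (div_le_iff₀ (zero_lt_one.trans_le hu.one_le)).1 (hu.inv_le_deriv y)
  rw [norm_div, Complex.norm_real, Real.norm_of_nonneg (hu.deriv_pos y).le,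
    div_le_iff₀ (hu.deriv_pos y)]
  nlinarith [norm_nonneg z]

lemma hasDerivAt_div_deriv (hu : IsMonotoneShear U u) (hφ : Differentiable ℝ φ) (y : ℝ) :
    HasDerivAt (fun z => φ z / deriv u z)
      ((deriv φ y - φ y * (deriv (deriv u) y / deriv u y : ℝ)) / deriv u y) y := by
  have h_ne := hu.ofReal_deriv_ne_zero y
  refine ((hφ y).hasDerivAt.fun_div (hu.differentiable_deriv y).hasDerivAt.ofReal_comp
    h_ne).congr_deriv ?_
  push_cast
  field_simp

lemma norm_deriv_div_deriv_le (hu : IsMonotoneShear U u) (hφ : Differentiable ℝ φ) (y : ℝ) :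
    ‖deriv (fun z => φ z / deriv u z) y‖ ≤ U ^ 2 * (‖φ y‖ + ‖deriv φ y‖) := by
  have h_one := hu.one_le
  have h_curv : |deriv (deriv u) y / deriv u y| ≤ U := by
    rw [abs_div, abs_of_pos (hu.deriv_pos y), div_le_iff₀ (hu.deriv_pos y)]
    exact hu.abs_deriv_deriv_le y
  rw [(hu.hasDerivAt_div_deriv hφ y).deriv]
  calc ‖(deriv φ y - φ y * (deriv (deriv u) y / deriv u y : ℝ)) / deriv u y‖
      ≤ U * ‖deriv φ y - φ y * (deriv (deriv u) y / deriv u y : ℝ)‖ := hu.norm_div_deriv_le _ y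
    _ ≤ U * (‖deriv φ y‖ + ‖φ y‖ * U) := by
      grw [norm_sub_le, norm_mul, Complex.norm_real, Real.norm_eq_abs, h_curv]
    _ ≤ U * (U * ‖deriv φ y‖ + ‖φ y‖ * U) := by
      grw [← le_mul_of_one_le_left (norm_nonneg (deriv φ y)) h_one]
    _ = U ^ 2 * (‖φ y‖ + ‖deriv φ y‖) := by ring

lemma differentiable_div_deriv (hu : IsMonotoneShear U u) (hφ : Differentiable ℝ φ) :
    Differentiable ℝ fun y => φ y / deriv u y :=
  fun y => (hu.hasDerivAt_div_deriv hφ y).differentiableAt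

lemma memLp_div_deriv {p : ENNReal} (hu : IsMonotoneShear U u) (hφ : Differentiable ℝ φ)
    (hφ_memLp : MemLp φ p) : MemLp (fun y => φ y / deriv u y) p :=
  hφ_memLp.of_le_mul (hu.differentiable_div_deriv hφ).continuous.aestronglyMeasurable
    (.of_forall fun y => hu.norm_div_deriv_le (φ y) y)

lemma memLp_deriv_div_deriv {p : ENNReal} (hu : IsMonotoneShear U u) (hφ : Differentiable ℝ φ)
    (hφ_memLp : MemLp φ p) (hφ'_memLp : MemLp (deriv φ) p) :
    MemLp (deriv fun y => φ y / deriv u y) p :=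
  (hφ_memLp.norm.add hφ'_memLp.norm).of_le_mul (aestronglyMeasurable_deriv _ _)
    (.of_forall fun y => (hu.norm_deriv_div_deriv_le hφ y).trans <| by
      rw [Pi.add_apply, Real.norm_of_nonneg (by positivity)])

lemma abs_mul_norm_integral_mul_le (hu : IsMonotoneShear U u) (hg : Differentiable ℝ g)
    (hg_memLp : MemLp g 2) (hJ_memLp : MemLp (vectorFieldJ u k t g) 2)
    (hφ : Differentiable ℝ φ) (hφ_memLp : MemLp φ 2) (hφ'_memLp : MemLp (deriv φ) 2) :
    |k * t| * ‖∫ y, g y * φ y‖ ≤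
      ∫ y, U ^ 2 * (‖vectorFieldJ u k t g y‖ * ‖φ y‖ + ‖g y‖ * (‖φ y‖ + ‖deriv φ y‖)) := by
  set χ : ℝ → ℂ := fun y => φ y / deriv u y
  have hχ_memLp : MemLp χ 2 := hu.memLp_div_deriv hφ hφ_memLp
  have h_weight (y : ℝ) : deriv u y * χ y = φ y := mul_div_cancel₀ _ (hu.ofReal_deriv_ne_zero y)
  have h_field : Integrable fun y => vectorFieldJ u k t g y * χ y :=
    hJ_memLp.integrable_mul hχ_memLp
  have h_deriv : Integrable fun y => g y * deriv χ y :=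
    hg_memLp.integrable_mul (hu.memLp_deriv_div_deriv hφ hφ_memLp hφ'_memLp)
  have h_parts := integral_vectorFieldJ_mul hg (hu.differentiable_div_deriv hφ) h_field
    (by simp only [χ, h_weight]; exact hg_memLp.integrable_mul hφ_memLp) h_deriv
    (hg_memLp.integrable_mul hχ_memLp)
  simp only [χ, h_weight] at h_parts
  have h_dual : Complex.I * k * t * (∫ y, g y * φ y) =
      ∫ y, (vectorFieldJ u k t g y * χ y + g y * deriv χ y) := by
    rw [integral_add h_field h_deriv, h_parts, sub_add_cancel]
  calc |k * t| * ‖∫ y, g y * φ y‖ = ‖Complex.I * k * t * (∫ y, g y * φ y)‖ := by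
        simp [abs_mul]
    _ ≤ ∫ y, U ^ 2 * (‖vectorFieldJ u k t g y‖ * ‖φ y‖ + ‖g y‖ * (‖φ y‖ + ‖deriv φ y‖)) := by
      rw [h_dual]
      refine norm_integral_le_of_norm_le ?_ (.of_forall fun y => ?_)
      · exact ((hJ_memLp.norm.integrable_mul hφ_memLp.norm).add
          (hg_memLp.norm.integrable_mul (hφ_memLp.norm.add hφ'_memLp.norm))).const_mul _
      · have h_norm_χ : ‖χ y‖ ≤ U ^ 2 * ‖φ y‖ := (hu.norm_div_deriv_le (φ y) y).trans <| by
          grw [← le_self_pow₀ hu.one_le two_ne_zero]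
        grw [norm_add_le, norm_mul, norm_mul, hu.norm_deriv_div_deriv_le hφ, h_norm_χ]
        exact le_of_eq (by ring)

end IsMonotoneShear

end Duality

section StreamFunction

variable {U k t : ℝ} {u : ℝ → ℝ} {g ψ : ℝ → ℂ}

lemma integrable_streamEnergy_iff (hk : k ≠ 0) (hψ : Differentiable ℝ ψ) :
    Integrable (fun y => ‖deriv ψ y‖ ^ 2 + k ^ 2 * ‖ψ y‖ ^ 2) ↔
      MemLp ψ 2 ∧ MemLp (deriv ψ) 2 := by
  have h_meas : Measurable fun y => ‖deriv ψ y‖ ^ 2 := (measurable_deriv ψ).norm.pow_const 2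
  have h_add := integrable_add_iff_of_nonneg (μ := volume) (g := fun y => k ^ 2 * ‖ψ y‖ ^ 2)
    h_meas.aestronglyMeasurable (.of_forall fun y => by positivity)
    (.of_forall fun y => by positivity)
  refine h_add.trans ?_
  rw [integrable_const_mul_iff (pow_ne_zero 2 hk).isUnit,
    memLp_two_iff_integrable_sq_norm hψ.continuous.aestronglyMeasurable,
    memLp_two_iff_integrable_sq_norm (aestronglyMeasurable_deriv ψ _), and_comm]

/-- The weights leave only half of the stream energy on the right, so that it can be absorbed. -/
lemma mul_add_mul_le_young (c m a b p q : ℝ) (hk : 1 ≤ |k|) :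
    c * (m * (b * p + a * (p + q))) ≤
      c ^ 2 / 2 * (q ^ 2 + k ^ 2 * p ^ 2) + 3 * m ^ 2 / 2 * (a ^ 2 + b ^ 2) := by
  have h_young_p := two_mul_le_add_sq (c * p) (m * (a + b))
  have h_young_q := two_mul_le_add_sq (c * q) (m * a)
  have h_add_sq : (m * (a + b)) ^ 2 ≤ 2 * m ^ 2 * (a ^ 2 + b ^ 2) := by
    nlinarith [sq_nonneg (m * (a - b))]
  have h_freq : (c * p) ^ 2 ≤ k ^ 2 * (c * p) ^ 2 :=
    le_mul_of_one_le_left (sq_nonneg _) ((one_le_sq_iff_one_le_abs k).2 hk)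
  nlinarith [sq_nonneg (m * b)]

namespace IsStreamFunction

lemma streamEnergy_eq (hψ : IsStreamFunction k g ψ) (hg_memLp : MemLp g 2)
    (hψ_memLp : MemLp ψ 2) (hψ'_memLp : MemLp (deriv ψ) 2) :
    streamEnergy k ψ = -(∫ y, g y * star (ψ y)).re := by
  have h_second (y : ℝ) : deriv (deriv ψ) y = g y + (k : ℂ) ^ 2 * ψ y :=
    sub_eq_iff_eq_add.1 (hψ.deriv_deriv_sub y)
  have h_source : Integrable fun y => g y * star (ψ y) := hg_memLp.integrable_mul hψ_memLp.star
  have h_sq : Integrable fun y => (k : ℂ) ^ 2 * (ψ y * star (ψ y)) :=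
    (hψ_memLp.integrable_mul hψ_memLp.star).const_mul _
  have h_sq' : Integrable fun y => deriv ψ y * star (deriv ψ y) :=
    hψ'_memLp.integrable_mul hψ'_memLp.star
  have h_expand (y : ℝ) : deriv (deriv ψ) y * star (ψ y) =
      g y * star (ψ y) + (k : ℂ) ^ 2 * (ψ y * star (ψ y)) := by
    rw [h_second]
    ring
  have h_parts := integral_mul_deriv_eq_deriv_mul_of_integrable
    (fun y _ => (hψ.differentiable_deriv y).hasDerivAt)
    (fun y _ => (hψ.differentiable y).hasDerivAt.star) h_sq'
    ((h_source.add h_sq).congr (.of_forall fun y => (h_expand y).symm))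
    (hψ'_memLp.integrable_mul hψ_memLp.star)
  simp only [h_expand] at h_parts
  rw [integral_add h_source h_sq] at h_parts
  have h_energy : (streamEnergy k ψ : ℂ) =
      (∫ y, deriv ψ y * star (deriv ψ y)) + ∫ y, (k : ℂ) ^ 2 * (ψ y * star (ψ y)) := by
    rw [streamEnergy, ← integral_complex_ofReal, ← integral_add h_sq' h_sq]
    simp only [Complex.star_def, Complex.mul_conj']
    push_cast
    rfl
  rw [← Complex.ofReal_re (streamEnergy k ψ), ← Complex.neg_re]
  congr 1
  linear_combination h_energy + h_parts

lemma sq_mul_streamEnergy_le_integral (hψ : IsStreamFunction k g ψ) (hu : IsMonotoneShear U u)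
    (hg : Differentiable ℝ g) (hg_memLp : MemLp g 2) (hJ_memLp : MemLp (vectorFieldJ u k t g) 2)
    (hψ_memLp : MemLp ψ 2) (hψ'_memLp : MemLp (deriv ψ) 2) :
    (k * t) ^ 2 * streamEnergy k ψ ≤ ∫ y, |k * t| *
      (U ^ 2 * (‖vectorFieldJ u k t g y‖ * ‖ψ y‖ + ‖g y‖ * (‖ψ y‖ + ‖deriv ψ y‖))) := by
  have h_deriv_star : deriv (fun y => star (ψ y)) = fun y => star (deriv ψ y) :=
    funext fun y => (hψ.differentiable y).hasDerivAt.star.deriv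
  have h_duality := hu.abs_mul_norm_integral_mul_le hg hg_memLp hJ_memLp hψ.differentiable.star
    hψ_memLp.star (h_deriv_star ▸ hψ'_memLp.star)
  simp only [h_deriv_star, norm_star] at h_duality
  rw [integral_const_mul, ← sq_abs, sq, mul_assoc,
    hψ.streamEnergy_eq hg_memLp hψ_memLp hψ'_memLp]
  grw [neg_le_abs, Complex.abs_re_le_norm, h_duality]

lemma sq_mul_streamEnergy_le_of_memLp (hψ : IsStreamFunction k g ψ) (hu : IsMonotoneShear U u)
    (hk : 1 ≤ |k|) (hg : Differentiable ℝ g) (hg_memLp : MemLp g 2)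
    (hJ_memLp : MemLp (vectorFieldJ u k t g) 2) (hψ_memLp : MemLp ψ 2)
    (hψ'_memLp : MemLp (deriv ψ) 2) :
    (k * t) ^ 2 * streamEnergy k ψ ≤
      3 * U ^ 4 * ((∫ y, ‖g y‖ ^ 2) + ∫ y, ‖vectorFieldJ u k t g y‖ ^ 2) := by
  have h_energy := (integrable_streamEnergy_iff (abs_pos.1 (zero_lt_one.trans_le hk))
    hψ.differentiable).2 ⟨hψ_memLp, hψ'_memLp⟩
  have h_g := hg_memLp.integrable_norm_pow two_ne_zero
  have h_J := hJ_memLp.integrable_norm_pow two_ne_zero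
  have h_sum : Integrable fun y => ‖g y‖ ^ 2 + ‖vectorFieldJ u k t g y‖ ^ 2 := h_g.add h_J
  have h_absorb : (k * t) ^ 2 * streamEnergy k ψ ≤ |k * t| ^ 2 / 2 * streamEnergy k ψ +
      3 * (U ^ 2) ^ 2 / 2 * ((∫ y, ‖g y‖ ^ 2) + ∫ y, ‖vectorFieldJ u k t g y‖ ^ 2) := by
    calc (k * t) ^ 2 * streamEnergy k ψ
        ≤ ∫ y, |k * t| *
          (U ^ 2 * (‖vectorFieldJ u k t g y‖ * ‖ψ y‖ + ‖g y‖ * (‖ψ y‖ + ‖deriv ψ y‖))) :=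
        hψ.sq_mul_streamEnergy_le_integral hu hg hg_memLp hJ_memLp hψ_memLp hψ'_memLp
      _ ≤ ∫ y, (|k * t| ^ 2 / 2 * (‖deriv ψ y‖ ^ 2 + k ^ 2 * ‖ψ y‖ ^ 2) +
          3 * (U ^ 2) ^ 2 / 2 * (‖g y‖ ^ 2 + ‖vectorFieldJ u k t g y‖ ^ 2)) :=
        integral_mono_of_nonneg (.of_forall fun y => by positivity)
          ((h_energy.const_mul _).add (h_sum.const_mul _))
          (.of_forall fun y => mul_add_mul_le_young _ _ _ _ _ _ hk)
      _ = |k * t| ^ 2 / 2 * streamEnergy k ψ +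
          3 * (U ^ 2) ^ 2 / 2 * ((∫ y, ‖g y‖ ^ 2) + ∫ y, ‖vectorFieldJ u k t g y‖ ^ 2) := by
        rw [integral_add (h_energy.const_mul _) (h_sum.const_mul _), integral_const_mul,
          integral_const_mul, integral_add h_g h_J, streamEnergy]
  rw [sq_abs] at h_absorb
  linarith

lemma sq_mul_streamEnergy_le (hψ : IsStreamFunction k g ψ) (hu : IsMonotoneShear U u)
    (hk : 1 ≤ |k|) (hg : Differentiable ℝ g) (hg_memLp : MemLp g 2)
    (hJ_memLp : MemLp (vectorFieldJ u k t g) 2) :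
    (k * t) ^ 2 * streamEnergy k ψ ≤
      3 * U ^ 4 * ((∫ y, ‖g y‖ ^ 2) + ∫ y, ‖vectorFieldJ u k t g y‖ ^ 2) := by
  by_cases h_energy : Integrable fun y => ‖deriv ψ y‖ ^ 2 + k ^ 2 * ‖ψ y‖ ^ 2
  · have hk₀ : k ≠ 0 := abs_pos.1 (zero_lt_one.trans_le hk)
    obtain ⟨hψ_memLp, hψ'_memLp⟩ := (integrable_streamEnergy_iff hk₀ hψ.differentiable).1 h_energy
    exact hψ.sq_mul_streamEnergy_le_of_memLp hu hk hg hg_memLp hJ_memLp hψ_memLp hψ'_memLp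
  · rw [streamEnergy, integral_undef h_energy, mul_zero]
    positivity

end IsStreamFunction

end StreamFunction

theorem inviscid_mixing_vector_field_general {𝔘 k : ℝ} {u : ℝ → ℝ} {g : ℝ → ℝ → ℂ} {ψ : ℝ → ℂ}
    (hu : IsMonotoneShear 𝔘 u) (hk : 1 ≤ |k|) (hg : IsFreeTransport u k g)
    (hg₀ : Differentiable ℝ (g 0)) (hg₀_memLp : MemLp (g 0) 2)
    (hg₀'_memLp : MemLp (deriv (g 0)) 2) (t : ℝ) (hψ : IsStreamFunction k (g t) ψ) :
    (∫ y, ‖g t y‖ ^ 2) + ∫ y, ‖vectorFieldJ u k t (g t) y‖ ^ 2 =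
        (∫ y, ‖g 0 y‖ ^ 2) + ∫ y, ‖deriv (g 0) y‖ ^ 2 ∧
      (k * t) ^ 2 * streamEnergy k ψ ≤
        3 * 𝔘 ^ 4 * ((∫ y, ‖g 0 y‖ ^ 2) + ∫ y, ‖deriv (g 0) y‖ ^ 2) := by
  have h_conserved : (∫ y, ‖g t y‖ ^ 2) + ∫ y, ‖vectorFieldJ u k t (g t) y‖ ^ 2 =
      (∫ y, ‖g 0 y‖ ^ 2) + ∫ y, ‖deriv (g 0) y‖ ^ 2 := by
    simp only [hg.norm_eq t, hg.norm_vectorFieldJ_eq hu.differentiable hg₀ t]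
  refine ⟨h_conserved, h_conserved ▸ hψ.sq_mul_streamEnergy_le hu hk ?_ ?_ ?_⟩
  · exact hg.differentiable hu.differentiable hg₀ t
  · exact hg.memLp hu.differentiable hg₀ hg₀_memLp t
  · exact hg.memLp_vectorFieldJ hu.differentiable hg₀ hg₀'_memLp t

/-- Inviscid mixing via the vector field: for free transport (`ν = 0`) at
`x`-frequency band `±k` (Fourier coefficient `g(t,y)` solving `∂_t g + iku g = 0`,
with stream function coefficient `ψ` solving `∂_yy ψ − k²ψ = g`), the quantity
`‖f_k‖² + ‖Jf_k‖² = ∫‖g‖² + ∫‖∂_y g + iktu' g‖²` is conserved, and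
`(kt)²‖f_k(t)‖²_{Ḣ⁻¹} ≤ 4𝔘⁴(‖f_k(0)‖² + ‖∂_y f_k(0)‖²)`. -/
theorem inviscid_mixing_vector_field (𝔘 : ℝ) (hU : 1 ≤ 𝔘)
    (u : ℝ → ℝ) (hu : ContDiff ℝ 3 u)
    (hu' : ∀ y : ℝ, 1 / 𝔘 ≤ deriv u y)
    (hu'' : ∀ y : ℝ, |deriv (deriv u) y| ≤ 𝔘 * deriv u y)
    (hu''' : ∀ y : ℝ, |deriv (deriv (deriv u)) y| ≤ 𝔘 * deriv u y)
    (k : ℕ) (hk : 1 ≤ k)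
    (g : ℝ → ℝ → ℂ) (hg : ContDiff ℝ (⊤ : ℕ∞) (fun p : ℝ × ℝ => g p.1 p.2))
    (hgsupp : ∀ t : ℝ, HasCompactSupport (g t))
    (hpde : ∀ t y : ℝ,
      deriv (fun s => g s y) t + Complex.I * (k : ℂ) * ((u y : ℝ) : ℂ) * g t y = 0)
    (ψ : ℝ → ℝ → ℂ) (hψ : ContDiff ℝ (⊤ : ℕ∞) (fun p : ℝ × ℝ => ψ p.1 p.2))
    (hstream : ∀ t y : ℝ,
      deriv (fun z => deriv (fun w => ψ t w) z) y - (k : ℝ)^2 * ψ t y = g t y) :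
    ∀ t : ℝ, 0 ≤ t →
      ((∫ y : ℝ, ‖g t y‖^2)
          + ∫ y : ℝ, ‖deriv (fun z => g t z) y
              + Complex.I * (k : ℂ) * (t : ℂ) * ((deriv u y : ℝ) : ℂ) * g t y‖^2)
        = ((∫ y : ℝ, ‖g 0 y‖^2) + ∫ y : ℝ, ‖deriv (fun z => g 0 z) y‖^2) ∧
      ((k : ℝ) * t)^2 *
          (∫ y : ℝ, (‖deriv (fun z => ψ t z) y‖^2 + (k : ℝ)^2 * ‖ψ t y‖^2))
        ≤ 4 * 𝔘^4 *
            ((∫ y : ℝ, ‖g 0 y‖^2) + ∫ y : ℝ, ‖deriv (fun z => g 0 z) y‖^2) := by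
  have hgt (t : ℝ) : ContDiff ℝ (⊤ : ℕ∞) (g t) := hg.comp (contDiff_prodMk_right t)
  have hψt (t : ℝ) : ContDiff ℝ (⊤ : ℕ∞) (ψ t) := hψ.comp (contDiff_prodMk_right t)
  have h_shear : IsMonotoneShear 𝔘 u :=
    ⟨hU, hu.differentiable (by norm_num), (hu.of_le (by norm_num)).differentiable_deriv_two, hu',
      hu''⟩
  have h_transport : IsFreeTransport u k g := fun t y =>
    ((hg.comp (contDiff_prodMk_left y)).differentiable (by simp) t).hasDerivAt.congr_deriv
      (eq_neg_of_add_eq_zero_left (hpde t y))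
  have h_stream (t : ℝ) : IsStreamFunction k (g t) (ψ t) :=
    ⟨(hψt t).differentiable (by simp),
      (contDiff_infty.1 (hψt t) 2).differentiable_deriv_two, hstream t⟩
  intro t _
  obtain ⟨h_conserved, h_decay⟩ := inviscid_mixing_vector_field_general h_shear
    (by simpa using hk) h_transport ((hgt 0).differentiable (by simp))
    ((hgt 0).continuous.memLp_of_hasCompactSupport (hgsupp 0))
    (((hgt 0).continuous_deriv (by simp)).memLp_of_hasCompactSupport (hgsupp 0).deriv) t
    (h_stream t)
  refine ⟨h_conserved, h_decay.trans ?_⟩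
  gcongr
  norm_num
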